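/- Decay estimates: there is an absolute constant C such that for every t > 0 and every real-valued tempered distribution u whose profile ũ(p) = e^{−itp³} û(p) satisfies ũ ∈ L^∞(ℝ) and ∂_p ũ ∈ L²((0, ∞)), the function u is continuous and for all x ∈ ℝ: |u(x)| ≤ C t^{−1/3} ⟨|x|/t^{1/3}⟩^{−1/4} ‖u‖_{E(t)} and |∂ₓ u(x)| ≤ C t^{−2/3} ⟨|x|/t^{1/3}⟩^{1/4} ‖u‖_{E(t)}, where ‖u‖_{E(t)} = ‖ũ‖_{L^∞} + t^{−1/6} ‖∂_p ũ‖_{L²((0,∞))}. -/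

import Mathlib

open MeasureTheory Set Filter Topology

noncomputable section

namespace MKdVPaper

/-- The Japanese bracket `⟨y⟩ = √(1+y²)`. -/
def jap (y : ℝ) : ℝ := Real.sqrt (1 + y ^ 2)

/-- Truncated Fourier-type integral recovering the physical function from a profile `w`:
`(1/π) Re ∫_0^R e^{i(px + p³ t)} w(p) dp`. -/
def physPartial (w : ℝ → ℂ) (t x R : ℝ) : ℝ :=
  (1 / Real.pi) *
    (∫ p in Ioc (0 : ℝ) R, Complex.exp (Complex.I * ((p * x + p ^ 3 * t : ℝ) : ℂ)) * w p).re

/-- `u` is the physical-space function associated with the profile `w` at time `t`, i.e.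
`u(x) = (1/π) Re ∫_0^∞ e^{i(px + p³t)} w(p) dp` as an improper integral. -/
def IsPhys (w : ℝ → ℂ) (t : ℝ) (u : ℝ → ℝ) : Prop :=
  ∀ x : ℝ, Tendsto (fun R => physPartial w t x R) atTop (𝓝 (u x))

/-- Sup norm of a profile. -/
def supN (w : ℝ → ℂ) : ℝ := ⨆ p : ℝ, ‖w p‖

/-- `L²((0,∞))` norm of the derivative of the profile. -/
def dL2 (w : ℝ → ℂ) : ℝ := (eLpNorm (deriv w) 2 (volume.restrict (Ioi 0))).toReal

/-- The `E(t)` norm: `‖ũ‖_{L^∞} + t^{-1/6} ‖∂_p ũ‖_{L²((0,∞))}`. -/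
def EnormP (t : ℝ) (w : ℝ → ℂ) : ℝ := supN w + t ^ (-(1 / 6 : ℝ)) * dL2 w

/-- Membership conditions for `E(t)` on the profile side: profile of a real-valued
distribution, bounded and continuous on `(0,∞)`, with derivative in `L²((0,∞))`. -/
structure MemE (w : ℝ → ℂ) : Prop where
  symm : ∀ p : ℝ, w (-p) = starRingEnd ℂ (w p)
  cont : ContinuousOn w (Ioi 0)
  bdd : BddAbove (range fun p : ℝ => ‖w p‖)
  diff : ∀ p ∈ Ioi (0 : ℝ), DifferentiableAt ℝ w p
  derivL2 : MemLp (deriv w) 2 (volume.restrict (Ioi 0))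

/-- A space-time function of class `E(I)`: a physical function `u` together with its
profile `w(t,p) = e^{-itp³} û(t,p)`. -/
structure ESol (I : Set ℝ) where
  u : ℝ → ℝ → ℝ
  w : ℝ → ℝ → ℂ
  memE : ∀ t ∈ I, MemE (w t)
  isPhys : ∀ t ∈ I, IsPhys (w t) t (u t)
  contt : ContinuousOn (fun q : ℝ × ℝ => w q.1 q.2) (I ×ˢ Ioi 0)

/-- Finiteness of the `E(I)` norm: `sup_{t ∈ I} ‖u(t)‖_{E(t)} < ∞`. -/
def FiniteEnorm (I : Set ℝ) (sol : ESol I) : Prop :=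
  BddAbove ((fun t => EnormP t (sol.w t)) '' I)

/-- Time derivative of a test function. -/
def dt1 (φ : ℝ → ℝ → ℝ) : ℝ → ℝ → ℝ := fun t x => deriv (fun s => φ s x) t

/-- Space derivative of a test function. -/
def dx1 (φ : ℝ → ℝ → ℝ) : ℝ → ℝ → ℝ := fun t x => deriv (fun y => φ t y) x

/-- `u` is a distributional solution of `∂ₜ u + ∂ₓ³ u + ε ∂ₓ(u³) = 0` on `I × ℝ`. -/
def IsSolOn (ε : ℝ) (u : ℝ → ℝ → ℝ) (I : Set ℝ) : Prop :=
  ∀ φ : ℝ → ℝ → ℝ,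
    ContDiff ℝ (⊤ : ℕ∞) (fun q : ℝ × ℝ => φ q.1 q.2) →
    HasCompactSupport (fun q : ℝ × ℝ => φ q.1 q.2) →
    tsupport (fun q : ℝ × ℝ => φ q.1 q.2) ⊆ interior I ×ˢ univ →
    (∫ q : ℝ × ℝ,
      (u q.1 q.2 * (dt1 φ q.1 q.2 + dx1 (dx1 (dx1 φ)) q.1 q.2)
        + ε * u q.1 q.2 ^ 3 * dx1 φ q.1 q.2)) = 0

/-- Self-similar solution: `S(t,x) = t^{-1/3} V(t^{-1/3} x)`. -/
def SelfSimilar {I : Set ℝ} (S : ESol I) : Prop :=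
  ∃ V : ℝ → ℝ, ∀ t ∈ I, ∀ x : ℝ,
    S.u t x = t ^ (-(1 / 3 : ℝ)) * V (t ^ (-(1 / 3 : ℝ)) * x)

/-- The Fourier transform at time 1 recovered from the profile: `û(1,p) = e^{ip³} ũ(1,p)`. -/
def hatAtOne (w : ℝ → ℂ) : ℝ → ℂ := fun p => Complex.exp (Complex.I * ((p ^ 3 : ℝ) : ℂ)) * w p

/-- The Fourier transforms at time 1 have the same limit at frequency `0⁺`. -/
def SameZeroLimit (w₁ w₂ : ℝ → ℂ) : Prop :=
  ∃ c : ℂ, Tendsto (hatAtOne w₁) (𝓝[>] (0 : ℝ)) (𝓝 c) ∧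
    Tendsto (hatAtOne w₂) (𝓝[>] (0 : ℝ)) (𝓝 c)

/-- Truncated Airy–Fock integral. -/
def AiP (z R : ℝ) : ℂ :=
  ((1 / Real.pi : ℝ) : ℂ) *
    ∫ p in Ioc (0 : ℝ) R, Complex.exp (Complex.I * ((p * z + p ^ 3 : ℝ) : ℂ))

/-- The Airy–Fock function `Ai(z) = (1/π)∫_0^∞ e^{i(pz+p³)} dp` (improper integral). -/
def AiFock (z : ℝ) : ℂ := limUnder atTop fun R => AiP z R

end MKdVPaper
namespace MKdVPaper

lemma MemE.norm_le_supN {w : ℝ → ℂ} (hw : MemE w) (p : ℝ) : ‖w p‖ ≤ supN w :=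
  le_ciSup hw.bdd p

lemma MemE.supN_nonneg {w : ℝ → ℂ} (hw : MemE w) : 0 ≤ supN w :=
  (norm_nonneg _).trans (hw.norm_le_supN 0)

lemma dL2_nonneg (w : ℝ → ℂ) : 0 ≤ dL2 w := ENNReal.toReal_nonneg

lemma sub_ne_zero_of_separated {a b c d : ℝ} (hd : 0 < d) (h : d ≤ b - a ∨ d ≤ a - c)
    {p : ℝ} (hp : p ∈ Icc b c) : p - a ≠ 0 := by
  rcases h with h | h
  · exact (by linarith [hp.1] : 0 < p - a).ne'
  · exact (by linarith [hp.2] : p - a < 0).ne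

lemma le_abs_sub_of_separated {a b c d : ℝ} (h : d ≤ b - a ∨ d ≤ a - c)
    {p : ℝ} (hp : p ∈ Icc b c) : d ≤ |p - a| := by
  rcases h with h | h
  · exact le_trans (by linarith [hp.1]) (le_abs_self _)
  · exact le_trans (by linarith [hp.2]) (neg_le_abs _)

lemma continuousOn_inv_sq {a b c d : ℝ} (hd : 0 < d) (h : d ≤ b - a ∨ d ≤ a - c) :
    ContinuousOn (fun p : ℝ => ((p - a) ^ 2)⁻¹) (Icc b c) :=
  ContinuousOn.inv₀ (by fun_prop) fun _ hp => pow_ne_zero 2 (sub_ne_zero_of_separated hd h hp)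

lemma integral_inv_sq_le {a b c d : ℝ} (hbc : b ≤ c) (hd : 0 < d)
    (h : d ≤ b - a ∨ d ≤ a - c) : ∫ p in b..c, ((p - a) ^ 2)⁻¹ ≤ 1 / d := by
  have hI : ∫ p in b..c, ((p - a) ^ 2)⁻¹ = -(c - a)⁻¹ - -(b - a)⁻¹ := by
    refine intervalIntegral.integral_eq_sub_of_hasDerivAt (f := fun p => -(p - a)⁻¹) ?_ ?_
    · intro p hp
      rw [uIcc_of_le hbc] at hp
      have hne := sub_ne_zero_of_separated hd h hp
      refine ((((hasDerivAt_id p).sub_const a).fun_inv hne).fun_neg).congr_deriv ?_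
      rw [neg_div, neg_neg, one_div, id]
    · refine ContinuousOn.intervalIntegrable ?_
      rw [uIcc_of_le hbc]
      exact continuousOn_inv_sq hd h
  rw [hI, one_div]
  rcases h with h | h
  · have h1 : (b - a)⁻¹ ≤ d⁻¹ := inv_anti₀ hd h
    have h2 : 0 ≤ (c - a)⁻¹ := inv_nonneg.2 (by linarith)
    linarith
  · have h1 : (a - c)⁻¹ ≤ d⁻¹ := inv_anti₀ hd h
    have h2 : 0 ≤ (a - b)⁻¹ := inv_nonneg.2 (by linarith)
    have h3 : (c - a)⁻¹ = -(a - c)⁻¹ := by rw [← inv_neg, neg_sub]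
    have h4 : (b - a)⁻¹ = -(a - b)⁻¹ := by rw [← inv_neg, neg_sub]
    rw [h3, h4]
    linarith

lemma MemE.memLp_deriv_Ioc {w : ℝ → ℂ} (hw : MemE w) {b : ℝ} (hb : 0 < b) (c : ℝ) :
    MemLp (deriv w) 2 (volume.restrict (Ioc b c)) :=
  hw.derivL2.mono_measure (Measure.restrict_mono (fun _ hp => hb.trans hp.1) le_rfl)

lemma MemE.intervalIntegrable_deriv {w : ℝ → ℂ} (hw : MemE w) {b c : ℝ} (hb : 0 < b)
    (hbc : b ≤ c) : IntervalIntegrable (deriv w) volume b c :=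
  (intervalIntegrable_iff_integrableOn_Ioc_of_le hbc).2
    ((hw.memLp_deriv_Ioc hb c).integrable (by norm_num))

/-- Cauchy–Schwarz against the singular weight `1 / |p - a|`. -/
lemma MemE.integral_weighted_deriv_le {w : ℝ → ℂ} (hw : MemE w) {a b c d : ℝ} (hb : 0 < b)
    (hbc : b ≤ c) (hd : 0 < d) (h : d ≤ b - a ∨ d ≤ a - c) :
    ∫ p in b..c, |p - a|⁻¹ * ‖deriv w p‖ ≤ 1 / √d * dL2 w := by
  have hcont : ContinuousOn (fun p : ℝ => (p - a)⁻¹) (Icc b c) :=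
    ContinuousOn.inv₀ (by fun_prop) fun _ hp => sub_ne_zero_of_separated hd h hp
  have hmeas : AEStronglyMeasurable (fun p : ℝ => (((p - a)⁻¹ : ℝ) : ℂ))
      (volume.restrict (Ioc b c)) :=
    ((Complex.continuous_ofReal.comp_continuousOn hcont).mono Ioc_subset_Icc_self).aestronglyMeasurable
      measurableSet_Ioc
  have hL : MemLp (fun p : ℝ => (((p - a)⁻¹ : ℝ) : ℂ)) 2 (volume.restrict (Ioc b c)) := by
    refine MemLp.of_bound hmeas (d⁻¹) ?_
    filter_upwards [ae_restrict_mem measurableSet_Ioc] with p hp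
    rw [Complex.norm_real, norm_inv, Real.norm_eq_abs]
    exact inv_anti₀ hd (le_abs_sub_of_separated h (Ioc_subset_Icc_self hp))
  have hD := hw.memLp_deriv_Ioc hb c
  have hCS := integral_mul_norm_le_Lp_mul_Lq (μ := volume.restrict (Ioc b c))
    Real.HolderConjugate.two_two (f := fun p : ℝ => (((p - a)⁻¹ : ℝ) : ℂ)) (g := deriv w)
    (by rwa [ENNReal.ofReal_ofNat]) (by rwa [ENNReal.ofReal_ofNat])
  have hDle : (∫ p in Ioc b c, ‖deriv w p‖ ^ (2 : ℝ)) ^ (1 / 2 : ℝ) ≤ dL2 w := by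
    have h1 := hD.eLpNorm_eq_integral_rpow_norm (by norm_num) (by norm_num)
    have h2 : eLpNorm (deriv w) 2 (volume.restrict (Ioc b c)) ≤
        eLpNorm (deriv w) 2 (volume.restrict (Ioi 0)) :=
      eLpNorm_mono_measure _ (Measure.restrict_mono (fun _ hp => hb.trans hp.1) le_rfl)
    have h3 := ENNReal.toReal_mono hw.derivL2.eLpNorm_ne_top h2
    rw [h1, ENNReal.toReal_ofReal (by positivity)] at h3
    simpa [dL2] using h3
  have hWle : (∫ p in Ioc b c, ‖(((p - a)⁻¹ : ℝ) : ℂ)‖ ^ (2 : ℝ)) ^ (1 / 2 : ℝ) ≤ 1 / √d := by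
    have h1 : ∫ p in Ioc b c, ‖(((p - a)⁻¹ : ℝ) : ℂ)‖ ^ (2 : ℝ) =
        ∫ p in b..c, ((p - a) ^ 2)⁻¹ := by
      rw [intervalIntegral.integral_of_le hbc]
      refine integral_congr_ae (Eventually.of_forall fun p => ?_)
      simp only [Complex.norm_real, Real.norm_eq_abs]
      rw [show (2 : ℝ) = ((2 : ℕ) : ℝ) by norm_num, Real.rpow_natCast, sq_abs, inv_pow]
    rw [h1, ← Real.sqrt_eq_rpow, one_div, ← Real.sqrt_inv, ← one_div]
    exact Real.sqrt_le_sqrt (integral_inv_sq_le hbc hd h)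
  rw [intervalIntegral.integral_of_le hbc]
  calc ∫ p in Ioc b c, |p - a|⁻¹ * ‖deriv w p‖
      = ∫ p in Ioc b c, ‖(((p - a)⁻¹ : ℝ) : ℂ)‖ * ‖deriv w p‖ := by
        refine integral_congr_ae (Eventually.of_forall fun p => ?_)
        simp only [Complex.norm_real, Real.norm_eq_abs, abs_inv]
    _ ≤ _ := hCS
    _ ≤ _ := mul_le_mul hWle hDle (by positivity) (by positivity)

/-- One integration by parts against the phase `φ`, away from the point `a`. -/
lemma MemE.norm_integral_nonstationary_le {w : ℝ → ℂ} (hw : MemE w) {a b c d K : ℝ} (hb : 0 < b)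
    (hbc : b ≤ c) (hd : 0 < d) (h : d ≤ b - a ∨ d ≤ a - c) {φ φ' g g' : ℝ → ℝ}
    (hφ : ∀ p ∈ Icc b c, HasDerivAt φ (φ' p) p) (hφ' : ContinuousOn φ' (Icc b c))
    (hg : ∀ p ∈ Icc b c, HasDerivAt g (g' p) p) (hg' : ContinuousOn g' (Icc b c))
    (hgK : ∀ p ∈ Icc b c, |g p| ≤ K * |p - a|⁻¹)
    (hgK' : ∀ p ∈ Icc b c, |g' p| ≤ K * ((p - a) ^ 2)⁻¹) :
    ‖∫ p in b..c, ((g p * φ' p : ℝ) : ℂ) * (Complex.exp (Complex.I * (φ p : ℂ)) * w p)‖ ≤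
      3 * K / d * supN w + K / √d * dL2 w := by
  set A := supN w
  have hA : 0 ≤ A := hw.supN_nonneg
  have hbm : b ∈ Icc b c := left_mem_Icc.2 hbc
  have hcm : c ∈ Icc b c := right_mem_Icc.2 hbc
  have hK : 0 ≤ K := by
    have h1 : 0 < |b - a|⁻¹ := inv_pos.2 (abs_pos.2 (sub_ne_zero_of_separated hd h hbm))
    exact nonneg_of_mul_nonneg_left ((abs_nonneg _).trans (hgK b hbm)) h1
  have hgd : ∀ p ∈ Icc b c, |g p| ≤ K / d := fun p hp => (hgK p hp).trans
    (mul_le_mul_of_nonneg_left (inv_anti₀ hd (le_abs_sub_of_separated h hp)) hK)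
  have hexp : ∀ p : ℝ, ‖Complex.exp (Complex.I * (φ p : ℂ))‖ = 1 := fun p => by
    rw [mul_comm]; exact Complex.norm_exp_ofReal_mul_I _
  have hφc : ContinuousOn φ (Icc b c) := fun p hp => (hφ p hp).continuousAt.continuousWithinAt
  have hgc : ContinuousOn g (Icc b c) := fun p hp => (hg p hp).continuousAt.continuousWithinAt
  have hwc : ContinuousOn w (Icc b c) := hw.cont.mono fun p hp => hb.trans_le hp.1
  have hof : ∀ {f : ℝ → ℝ}, ContinuousOn f (Icc b c) →
      ContinuousOn (fun p => (f p : ℂ)) (Icc b c) :=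
    fun hf => Complex.continuous_ofReal.comp_continuousOn hf
  have hec : ContinuousOn (fun p => Complex.exp (Complex.I * (φ p : ℂ))) (Icc b c) :=
    (continuousOn_const.mul (hof hφc)).cexp
  have hInt : ∀ {f : ℝ → ℂ}, ContinuousOn f (Icc b c) → IntervalIntegrable f volume b c :=
    fun hf => ContinuousOn.intervalIntegrable (by rwa [uIcc_of_le hbc])
  set E : ℝ → ℂ := fun p => Complex.exp (Complex.I * (φ p : ℂ))
  have hi1 : IntervalIntegrable (fun p => ((g p * φ' p : ℝ) : ℂ) * (E p * w p)) volume b c :=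
    hInt ((hof (hgc.mul hφ')).mul (hec.mul hwc))
  have hi2 : IntervalIntegrable (fun p => (g' p : ℂ) * (E p * w p)) volume b c :=
    hInt ((hof hg').mul (hec.mul hwc))
  have hi3 : IntervalIntegrable (fun p => (g p : ℂ) * E p * deriv w p) volume b c :=
    (hw.intervalIntegrable_deriv hb hbc).continuousOn_mul
      (by rw [uIcc_of_le hbc]; exact (hof hgc).mul hec)
  have hFTC : ∫ p in b..c, (Complex.I * (((g p * φ' p : ℝ) : ℂ) * (E p * w p)) +
      ((g' p : ℂ) * (E p * w p) + (g p : ℂ) * E p * deriv w p)) =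
      (g c : ℂ) * E c * w c - (g b : ℂ) * E b * w b := by
    refine intervalIntegral.integral_eq_sub_of_hasDerivAt
      (f := fun p => (g p : ℂ) * E p * w p) ?_ ((hi1.const_mul _).add (hi2.add hi3))
    intro p hp
    rw [uIcc_of_le hbc] at hp
    have h1 := (hg p hp).ofReal_comp
    have h2 := (((hφ p hp).ofReal_comp).const_mul Complex.I).cexp
    have h3 := (hw.diff p (hb.trans_le hp.1)).hasDerivAt
    refine ((h1.fun_mul h2).fun_mul h3).congr_deriv ?_
    simp only [E]
    push_cast
    ring
  rw [intervalIntegral.integral_add (hi1.const_mul _) (hi2.add hi3),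
    intervalIntegral.integral_add hi2 hi3, intervalIntegral.integral_const_mul] at hFTC
  have hb1 : ‖(g c : ℂ) * E c * w c‖ ≤ K / d * A := by
    rw [norm_mul, norm_mul, hexp, mul_one, Complex.norm_real]
    exact mul_le_mul (hgd c hcm) (hw.norm_le_supN c) (norm_nonneg _) (by positivity)
  have hb2 : ‖(g b : ℂ) * E b * w b‖ ≤ K / d * A := by
    rw [norm_mul, norm_mul, hexp, mul_one, Complex.norm_real]
    exact mul_le_mul (hgd b hbm) (hw.norm_le_supN b) (norm_nonneg _) (by positivity)
  have hb3 : ‖∫ p in b..c, (g' p : ℂ) * (E p * w p)‖ ≤ K / d * A := by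
    calc ‖∫ p in b..c, (g' p : ℂ) * (E p * w p)‖
        ≤ ∫ p in b..c, K * A * ((p - a) ^ 2)⁻¹ := by
          refine intervalIntegral.norm_integral_le_of_norm_le hbc
            (Eventually.of_forall fun p hp => ?_) ?_
          · rw [norm_mul, norm_mul, hexp, one_mul, Complex.norm_real]
            calc ‖g' p‖ * ‖w p‖ ≤ (K * ((p - a) ^ 2)⁻¹) * A :=
                  mul_le_mul (hgK' p (Ioc_subset_Icc_self hp)) (hw.norm_le_supN p)
                    (norm_nonneg _) (by positivity)
              _ = _ := by ring
          · refine ContinuousOn.intervalIntegrable ?_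
            rw [uIcc_of_le hbc]
            exact continuousOn_const.mul (continuousOn_inv_sq hd h)
      _ = K * A * ∫ p in b..c, ((p - a) ^ 2)⁻¹ := intervalIntegral.integral_const_mul _ _
      _ ≤ K * A * (1 / d) :=
          mul_le_mul_of_nonneg_left (integral_inv_sq_le hbc hd h) (by positivity)
      _ = _ := by ring
  have hb4 : ‖∫ p in b..c, (g p : ℂ) * E p * deriv w p‖ ≤ K / √d * dL2 w := by
    calc ‖∫ p in b..c, (g p : ℂ) * E p * deriv w p‖
        ≤ ∫ p in b..c, K * (|p - a|⁻¹ * ‖deriv w p‖) := by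
          refine intervalIntegral.norm_integral_le_of_norm_le hbc
            (Eventually.of_forall fun p hp => ?_) ?_
          · rw [norm_mul, norm_mul, hexp, mul_one, Complex.norm_real, ← mul_assoc]
            exact mul_le_mul_of_nonneg_right (hgK p (Ioc_subset_Icc_self hp)) (norm_nonneg _)
          · refine ((hw.intervalIntegrable_deriv hb hbc).norm.continuousOn_mul ?_).const_mul K
            rw [uIcc_of_le hbc]
            exact ContinuousOn.inv₀ (by fun_prop)
              fun _ hp => abs_ne_zero.2 (sub_ne_zero_of_separated hd h hp)
      _ = K * ∫ p in b..c, |p - a|⁻¹ * ‖deriv w p‖ := intervalIntegral.integral_const_mul _ _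
      _ ≤ K * (1 / √d * dL2 w) :=
          mul_le_mul_of_nonneg_left (hw.integral_weighted_deriv_le hb hbc hd h) hK
      _ = _ := by ring
  set J := ∫ p in b..c, ((g p * φ' p : ℝ) : ℂ) * (E p * w p)
  set J2 := ∫ p in b..c, (g' p : ℂ) * (E p * w p)
  set J3 := ∫ p in b..c, (g p : ℂ) * E p * deriv w p
  have hJ : ‖J‖ = ‖(g c : ℂ) * E c * w c - (g b : ℂ) * E b * w b - (J2 + J3)‖ := by
    rw [← hFTC, add_sub_cancel_right, norm_mul, Complex.norm_I, one_mul]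
  rw [hJ]
  calc _ ≤ ‖(g c : ℂ) * E c * w c‖ + ‖(g b : ℂ) * E b * w b‖ + (‖J2‖ + ‖J3‖) :=
        (norm_sub_le _ _).trans (add_le_add (norm_sub_le _ _) (norm_add_le _ _))
    _ ≤ K / d * A + K / d * A + (K / d * A + K / √d * dL2 w) := by gcongr
    _ = _ := by ring

/-- The oscillating factor `e^{i(px + p³)}`. -/
def osc (x p : ℝ) : ℂ := Complex.exp (Complex.I * ((p * x + p ^ 3 * 1 : ℝ) : ℂ))

lemma norm_osc (x p : ℝ) : ‖osc x p‖ = 1 := by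
  rw [osc, mul_comm]; exact Complex.norm_exp_ofReal_mul_I _

/-- `a ≥ 0` is the stationary point of `p ↦ px + p³` if `x ≤ 0`, and `0` if `x ≥ 0`. -/
def IsCritical (x a : ℝ) : Prop := 0 ≤ a ∧ (x = -3 * a ^ 2 ∨ (a = 0 ∧ 0 ≤ x))

lemma exists_isCritical (x : ℝ) : ∃ a, IsCritical x a := by
  rcases le_total 0 x with hx | hx
  · exact ⟨0, le_rfl, Or.inr ⟨rfl, hx⟩⟩
  · refine ⟨√(-x / 3), Real.sqrt_nonneg _, Or.inl ?_⟩
    rw [Real.sq_sqrt (by linarith)]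
    ring

lemma IsCritical.three_mul_sq_le {x a : ℝ} (h : IsCritical x a) : 3 * a ^ 2 ≤ |x| := by
  rcases h.2 with rfl | ⟨rfl, -⟩
  · rw [abs_of_nonpos (by nlinarith [sq_nonneg a])]; linarith
  · simp

lemma IsCritical.phase_deriv_ne_zero {x a p : ℝ} (h : IsCritical x a) (hp : 0 < p)
    (hpa : p - a ≠ 0) : x + 3 * p ^ 2 ≠ 0 := by
  obtain ⟨ha, rfl | ⟨rfl, hx⟩⟩ := h
  · rw [show -3 * a ^ 2 + 3 * p ^ 2 = 3 * ((p - a) * (p + a)) by ring]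
    have : p + a ≠ 0 := by positivity
    positivity
  · positivity

lemma IsCritical.abs_weight_one_le {x a p : ℝ} (h : IsCritical x a) (hp : 0 < p)
    (hpa : p - a ≠ 0) : |p / (x + 3 * p ^ 2)| ≤ 1 * |p - a|⁻¹ := by
  have hne := h.phase_deriv_ne_zero hp hpa
  rw [abs_div, one_mul, ← one_div, div_le_div_iff₀ (abs_pos.2 hne) (abs_pos.2 hpa), one_mul,
    abs_of_pos hp]
  obtain ⟨ha, rfl | ⟨rfl, hx⟩⟩ := h
  · rw [show -3 * a ^ 2 + 3 * p ^ 2 = 3 * ((p - a) * (p + a)) by ring, abs_mul, abs_mul,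
      abs_of_pos (by positivity : 0 < p + a), abs_of_pos (by norm_num : (0 : ℝ) < 3)]
    nlinarith [mul_nonneg (abs_nonneg (p - a)) hp.le, mul_nonneg (abs_nonneg (p - a)) ha]
  · rw [sub_zero, abs_of_pos hp, abs_of_pos (by positivity)]
    nlinarith

lemma IsCritical.abs_weight_one_deriv_le {x a p : ℝ} (h : IsCritical x a) (hp : 0 < p)
    (hpa : p - a ≠ 0) : |(x - 3 * p ^ 2) / (x + 3 * p ^ 2) ^ 2| ≤ 1 * ((p - a) ^ 2)⁻¹ := by
  have hne := h.phase_deriv_ne_zero hp hpa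
  rw [abs_div, abs_of_pos (by positivity : 0 < (x + 3 * p ^ 2) ^ 2), one_mul, ← one_div,
    div_le_div_iff₀ (by positivity) (by positivity), one_mul]
  obtain ⟨ha, rfl | ⟨rfl, hx⟩⟩ := h
  · rw [show -3 * a ^ 2 + 3 * p ^ 2 = 3 * ((p - a) * (p + a)) by ring,
      abs_of_nonpos (by nlinarith [sq_nonneg a, sq_nonneg p])]
    have : 0 ≤ (p - a) ^ 2 * (9 * (p + a) ^ 2 - 3 * (p ^ 2 + a ^ 2)) :=
      mul_nonneg (sq_nonneg _) (by nlinarith [mul_nonneg hp.le ha, sq_nonneg a, sq_nonneg p])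
    nlinarith
  · have h1 : |x - 3 * p ^ 2| ≤ x + 3 * p ^ 2 := by
      rw [abs_le]; constructor <;> nlinarith [sq_nonneg p]
    have h2 : 0 < x + 3 * p ^ 2 := by positivity
    rw [sub_zero, sq (x + 3 * p ^ 2)]
    exact mul_le_mul h1 (by nlinarith) (by positivity) h2.le

lemma IsCritical.abs_weight_zero_le {x a p s : ℝ} (h : IsCritical x a) (hp : 0 < p)
    (hpa : p - a ≠ 0) (hs : 0 < s) (hsx : s ^ 2 ≤ |x| ∨ (s ≤ 1 ∧ 1 ≤ p)) :
    |1 / (x + 3 * p ^ 2)| ≤ 2 / s * |p - a|⁻¹ := by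
  have hne := h.phase_deriv_ne_zero hp hpa
  rw [abs_div, abs_one, ← one_div, div_mul_div_comm, mul_one,
    div_le_div_iff₀ (abs_pos.2 hne) (mul_pos hs (abs_pos.2 hpa)), one_mul]
  obtain ⟨ha, rfl | ⟨rfl, hx⟩⟩ := h
  · rw [show -3 * a ^ 2 + 3 * p ^ 2 = 3 * ((p - a) * (p + a)) by ring, abs_mul, abs_mul,
      abs_of_pos (by positivity : 0 < p + a), abs_of_pos (by norm_num : (0 : ℝ) < 3)]
    have hsle : s ≤ 2 * (p + a) := by
      rcases hsx with hsx | hsx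
      · rw [abs_of_nonpos (by nlinarith [sq_nonneg a])] at hsx
        nlinarith
      · linarith [hsx.1, hsx.2]
    nlinarith [mul_le_mul_of_nonneg_right hsle (abs_nonneg (p - a)),
      mul_nonneg (abs_nonneg (p - a)) (by positivity : 0 ≤ p + a)]
  · rw [sub_zero, abs_of_pos hp, abs_of_pos (by positivity)]
    rcases hsx with hsx | hsx
    · rw [abs_of_nonneg hx] at hsx
      nlinarith [sq_nonneg (s - p)]
    · nlinarith [hsx.1, hsx.2]

lemma IsCritical.abs_weight_zero_deriv_le {x a p s : ℝ} (h : IsCritical x a) (hp : 0 < p)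
    (hpa : p - a ≠ 0) (hs : 0 < s) (hsx : s ^ 2 ≤ |x| ∨ (s ≤ 1 ∧ 1 ≤ p)) :
    |-(6 * p) / (x + 3 * p ^ 2) ^ 2| ≤ 2 / s * ((p - a) ^ 2)⁻¹ := by
  have hne := h.phase_deriv_ne_zero hp hpa
  rw [abs_div, abs_neg, abs_of_pos (by positivity : 0 < 6 * p),
    abs_of_pos (by positivity : 0 < (x + 3 * p ^ 2) ^ 2), ← one_div, div_mul_div_comm, mul_one,
    div_le_div_iff₀ (by positivity) (by positivity)]
  obtain ⟨ha, rfl | ⟨rfl, hx⟩⟩ := h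
  · rw [show -3 * a ^ 2 + 3 * p ^ 2 = 3 * ((p - a) * (p + a)) by ring]
    have hsle : s ≤ 2 * (p + a) := by
      rcases hsx with hsx | hsx
      · rw [abs_of_nonpos (by nlinarith [sq_nonneg a])] at hsx
        nlinarith
      · linarith [hsx.1, hsx.2]
    have h1 : p * s ≤ (p + a) * (2 * (p + a)) :=
      mul_le_mul (by linarith) hsle hs.le (by positivity)
    have h2 : 0 ≤ (p - a) ^ 2 * (18 * (p + a) ^ 2 - 6 * (p * s)) :=
      mul_nonneg (sq_nonneg _) (by nlinarith [sq_nonneg (p + a)])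
    nlinarith
  · rw [sub_zero]
    have h1 : 3 * (s * p) ≤ 6 * x + 9 * p ^ 2 := by
      rcases hsx with hsx | hsx
      · rw [abs_of_nonneg hx] at hsx
        nlinarith [sq_nonneg (s - p)]
      · nlinarith [hsx.1, hsx.2]
    nlinarith [mul_le_mul_of_nonneg_right h1 (sq_nonneg p), sq_nonneg x]

lemma hasDerivAt_phase (x p : ℝ) :
    HasDerivAt (fun p : ℝ => p * x + p ^ 3 * 1) (x + 3 * p ^ 2) p := by
  refine (((hasDerivAt_id p).mul_const x).fun_add ((hasDerivAt_pow 3 p).mul_const 1)).congr_deriv ?_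
  simp

lemma hasDerivAt_phase_deriv (x p : ℝ) :
    HasDerivAt (fun p : ℝ => x + 3 * p ^ 2) (6 * p) p := by
  refine (((hasDerivAt_pow 2 p).const_mul 3).const_add x).congr_deriv ?_
  simp; ring

lemma MemE.norm_integral_osc_le {w : ℝ → ℂ} (hw : MemE w) {x a b c d s : ℝ}
    (ha : IsCritical x a) (hb : 0 < b) (hbc : b ≤ c) (hd : 0 < d) (h : d ≤ b - a ∨ d ≤ a - c)
    (hs : 0 < s) (hsx : s ^ 2 ≤ |x| ∨ (s ≤ 1 ∧ 1 ≤ b)) :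
    ‖∫ p in b..c, osc x p * w p‖ ≤ 3 * (2 / s) / d * supN w + 2 / s / √d * dL2 w := by
  have hpos : ∀ p ∈ Icc b c, 0 < p := fun p hp => hb.trans_le hp.1
  have hne : ∀ p ∈ Icc b c, x + 3 * p ^ 2 ≠ 0 := fun p hp =>
    ha.phase_deriv_ne_zero (hpos p hp) (sub_ne_zero_of_separated hd h hp)
  have hsx' : ∀ p ∈ Icc b c, s ^ 2 ≤ |x| ∨ (s ≤ 1 ∧ 1 ≤ p) := fun p hp =>
    hsx.imp_right fun h' => ⟨h'.1, h'.2.trans hp.1⟩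
  have key := hw.norm_integral_nonstationary_le hb hbc hd h
    (φ := fun p => p * x + p ^ 3 * 1) (φ' := fun p => x + 3 * p ^ 2)
    (g := fun p => 1 / (x + 3 * p ^ 2)) (g' := fun p => -(6 * p) / (x + 3 * p ^ 2) ^ 2)
    (K := 2 / s) (fun p _ => hasDerivAt_phase x p) (by fun_prop) ?_ ?_
    (fun p hp => ha.abs_weight_zero_le (hpos p hp) (sub_ne_zero_of_separated hd h hp) hs
      (hsx' p hp))
    (fun p hp => ha.abs_weight_zero_deriv_le (hpos p hp) (sub_ne_zero_of_separated hd h hp) hs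
      (hsx' p hp))
  · convert key using 2
    refine intervalIntegral.integral_congr fun p hp => ?_
    rw [uIcc_of_le hbc] at hp
    simp only [one_div, inv_mul_cancel₀ (hne p hp), Complex.ofReal_one, one_mul, osc]
  · intro p hp
    simpa only [one_div] using (hasDerivAt_phase_deriv x p).fun_inv (hne p hp)
  · exact ContinuousOn.div (by fun_prop) (by fun_prop) fun p hp => pow_ne_zero 2 (hne p hp)

lemma MemE.norm_integral_mul_osc_le {w : ℝ → ℂ} (hw : MemE w) {x a b c d : ℝ}
    (ha : IsCritical x a) (hb : 0 < b) (hbc : b ≤ c) (hd : 0 < d)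
    (h : d ≤ b - a ∨ d ≤ a - c) :
    ‖∫ p in b..c, (p : ℂ) * (osc x p * w p)‖ ≤ 3 / d * supN w + 1 / √d * dL2 w := by
  have hpos : ∀ p ∈ Icc b c, 0 < p := fun p hp => hb.trans_le hp.1
  have hne : ∀ p ∈ Icc b c, x + 3 * p ^ 2 ≠ 0 := fun p hp =>
    ha.phase_deriv_ne_zero (hpos p hp) (sub_ne_zero_of_separated hd h hp)
  have key := hw.norm_integral_nonstationary_le hb hbc hd h
    (φ := fun p => p * x + p ^ 3 * 1) (φ' := fun p => x + 3 * p ^ 2)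
    (g := fun p => p / (x + 3 * p ^ 2)) (g' := fun p => (x - 3 * p ^ 2) / (x + 3 * p ^ 2) ^ 2)
    (K := 1) (fun p _ => hasDerivAt_phase x p) (by fun_prop) ?_ ?_
    (fun p hp => ha.abs_weight_one_le (hpos p hp) (sub_ne_zero_of_separated hd h hp))
    (fun p hp => ha.abs_weight_one_deriv_le (hpos p hp) (sub_ne_zero_of_separated hd h hp))
  · rw [mul_one] at key
    convert key using 2
    refine intervalIntegral.integral_congr fun p hp => ?_
    rw [uIcc_of_le hbc] at hp
    simp only [div_mul_cancel₀ _ (hne p hp), osc]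
  · intro p hp
    refine ((hasDerivAt_id p).fun_div (hasDerivAt_phase_deriv x p) (hne p hp)).congr_deriv ?_
    simp only [id]
    ring
  · exact ContinuousOn.div (by fun_prop) (by fun_prop) fun p hp => pow_ne_zero 2 (hne p hp)

lemma MemE.aestronglyMeasurable_mul_osc {w : ℝ → ℂ} (hw : MemE w) {m : ℝ → ℂ} (hm : Continuous m)
    (x R : ℝ) : AEStronglyMeasurable (fun p => m p * (osc x p * w p))
      (volume.restrict (Ioc 0 R)) := by
  have hosc : Continuous (osc x) := by unfold osc; fun_prop
  exact ((hm.continuousOn.mul (hosc.continuousOn.mul hw.cont)).mono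
    fun p hp => hp.1).aestronglyMeasurable measurableSet_Ioc

lemma MemE.integrable_mul_osc {w : ℝ → ℂ} (hw : MemE w) {m : ℝ → ℂ} (hm : Continuous m)
    (x R : ℝ) : Integrable (fun p => m p * (osc x p * w p)) (volume.restrict (Ioc 0 R)) := by
  obtain ⟨B, hB⟩ := (isCompact_Icc (a := (0 : ℝ)) (b := R)).exists_bound_of_continuousOn
    hm.continuousOn
  refine Integrable.of_bound (hw.aestronglyMeasurable_mul_osc hm x R) (B * supN w) ?_
  filter_upwards [ae_restrict_mem measurableSet_Ioc] with p hp
  have h1 := hB p (Ioc_subset_Icc_self hp)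
  rw [norm_mul, norm_mul, norm_osc, one_mul]
  exact mul_le_mul h1 (hw.norm_le_supN p) (norm_nonneg _) ((norm_nonneg _).trans h1)

lemma norm_integral_le_of_zones {f : ℝ → ℂ} {a δ L M R : ℝ} (ha : 0 ≤ a) (hδ : 0 < δ)
    (hR : a + δ ≤ R) (hf : IntegrableOn f (Ioc 0 R))
    (hnear : ∀ p ∈ Ioc 0 (a + δ), ‖f p‖ ≤ L)
    (hz : ∀ b c, 0 < b → b ≤ c → (δ ≤ b - a ∨ δ ≤ a - c) → ‖∫ p in b..c, f p‖ ≤ M) :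
    ‖∫ p in (0 : ℝ)..R, f p‖ ≤ 3 * δ * L + 2 * M := by
  have hint : ∀ {b c : ℝ}, 0 ≤ b → b ≤ c → c ≤ R → IntervalIntegrable f volume b c :=
    fun hb hbc hc => (intervalIntegrable_iff_integrableOn_Ioc_of_le hbc).2
      (hf.mono_set (Ioc_subset_Ioc hb hc))
  have hnb : ∀ {b c : ℝ}, 0 ≤ b → b ≤ c → c ≤ a + δ → ‖∫ p in b..c, f p‖ ≤ L * (c - b) := by
    intro b c hb hbc hc
    have := intervalIntegral.norm_integral_le_of_norm_le_const (a := b) (b := c) (C := L) (f := f)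
      fun p hp => hnear p (by rw [uIoc_of_le hbc] at hp; exact ⟨hb.trans_lt hp.1, hp.2.trans hc⟩)
    rwa [abs_of_nonneg (by linarith)] at this
  have hL : 0 ≤ L := (norm_nonneg _).trans (hnear (a + δ) ⟨by linarith, le_rfl⟩)
  have hfar := hz (a + δ) R (by linarith) hR (Or.inl (by linarith))
  have hM : 0 ≤ M := (norm_nonneg _).trans hfar
  have hfull := intervalIntegral.integral_add_adjacent_intervals
    (hint le_rfl (by linarith : 0 ≤ a + δ) hR) (hint (by linarith) hR le_rfl)
  rw [← hfull]
  refine (norm_add_le _ _).trans ?_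
  suffices ‖∫ p in (0 : ℝ)..(a + δ), f p‖ ≤ 3 * δ * L + M by linarith
  rcases le_total a (2 * δ) with h | h
  · have := hnb le_rfl (by linarith : 0 ≤ a + δ) le_rfl
    nlinarith
  · have h1 := hnb le_rfl hδ.le (by linarith)
    have h2 := hz δ (a - δ) hδ (by linarith) (Or.inr (by linarith))
    have h3 := hnb (by linarith : 0 ≤ a - δ) (by linarith : a - δ ≤ a + δ) le_rfl
    rw [← intervalIntegral.integral_add_adjacent_intervals
        (hint le_rfl hδ.le (by linarith)) (hint hδ.le (by linarith : δ ≤ a + δ) hR),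
      ← intervalIntegral.integral_add_adjacent_intervals
        (hint hδ.le (by linarith : δ ≤ a - δ) (by linarith))
        (hint (by linarith) (by linarith : a - δ ≤ a + δ) hR)]
    refine (norm_add_le _ _).trans ((add_le_add_right (norm_add_le _ _) _).trans ?_)
    nlinarith

/-- The scale `r = max(1,|x|)^{1/4}`, in polynomial form. -/
lemma exists_scale (x : ℝ) : ∃ r : ℝ, 1 ≤ r ∧ |x| ≤ r ^ 4 ∧ (r ^ 4 ≤ |x| ∨ r = 1) := by
  rcases le_total |x| 1 with h | h
  · exact ⟨1, le_rfl, by simpa using h, Or.inr rfl⟩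
  · refine ⟨√(√|x|), ?_, ?_, ?_⟩
    · rw [Real.one_le_sqrt, Real.one_le_sqrt]; exact h
    all_goals
      have : √(√|x|) ^ 4 = |x| := by
        rw [show 4 = 2 * 2 by norm_num, pow_mul, Real.sq_sqrt (Real.sqrt_nonneg _),
          Real.sq_sqrt (abs_nonneg _)]
      rw [this]
    exact Or.inl le_rfl

lemma IsCritical.le_sq {x a r : ℝ} (h : IsCritical x a) (hr : |x| ≤ r ^ 4) :
    a ≤ r ^ 2 := by
  have := h.three_mul_sq_le
  refine le_of_sq_le_sq ?_ (sq_nonneg r)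
  nlinarith [sq_nonneg a]

lemma inv_sqrt_inv_le {r : ℝ} (hr : 1 ≤ r) : 1 / √(1 / r) ≤ r := by
  rw [one_div r, Real.sqrt_inv, one_div, inv_inv]
  exact Real.sqrt_le_iff.2 ⟨by linarith, by nlinarith⟩

lemma MemE.norm_partial_le {w : ℝ → ℂ} (hw : MemE w) {x a r R : ℝ} (ha : IsCritical x a)
    (hr : 1 ≤ r) (hrx : r ^ 4 ≤ |x| ∨ r = 1) (hxr : |x| ≤ r ^ 4) (hR : a + 1 / r ≤ R) :
    ‖∫ p in (0 : ℝ)..R, osc x p * w p‖ ≤ 15 * (supN w + dL2 w) / r := by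
  have hr0 : 0 < r := by linarith
  have hA := hw.supN_nonneg
  have hB := dL2_nonneg w
  have hint := hw.integrable_mul_osc (m := fun _ => 1) continuous_const x R
  simp only [one_mul] at hint
  have key := norm_integral_le_of_zones (f := fun p => osc x p * w p) (L := supN w)
    (M := 6 / r * supN w + 2 / r * dL2 w) ha.1 (by positivity : 0 < 1 / r) hR hint
    (fun p _ => by rw [norm_mul, norm_osc, one_mul]; exact hw.norm_le_supN p) ?_
  · refine key.trans ?_
    rw [show 3 * (1 / r) * supN w + 2 * (6 / r * supN w + 2 / r * dL2 w) =
      (15 * supN w + 4 * dL2 w) / r by ring]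
    gcongr
    linarith
  · intro b c hb hbc h
    refine (hw.norm_integral_osc_le (s := r ^ 2) ha hb hbc (by positivity) h (by positivity)
      ?_).trans ?_
    · rcases hrx with hrx | rfl
      · left; rw [← pow_mul]; exact hrx
      · right
        refine ⟨by norm_num, ?_⟩
        have := ha.three_mul_sq_le
        rcases h with h | h
        · linarith [ha.1]
        · nlinarith [ha.1]
    · have h1 : 3 * (2 / r ^ 2) / (1 / r) = 6 / r := by field_simp; norm_num
      have h2 : 2 / r ^ 2 / √(1 / r) ≤ 2 / r := by
        rw [div_eq_mul_one_div]
        calc 2 / r ^ 2 * (1 / √(1 / r)) ≤ 2 / r ^ 2 * r := by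
              gcongr; exact inv_sqrt_inv_le hr
          _ = 2 / r := by field_simp
      rw [h1]
      gcongr

lemma MemE.norm_partial_deriv_le {w : ℝ → ℂ} (hw : MemE w) {x a r R : ℝ} (ha : IsCritical x a)
    (hr : 1 ≤ r) (hxr : |x| ≤ r ^ 4) (hR : a + 1 / r ≤ R) :
    ‖∫ p in (0 : ℝ)..R, (p : ℂ) * (osc x p * w p)‖ ≤ 15 * (supN w + dL2 w) * r := by
  have hr0 : 0 < r := by linarith
  have hA := hw.supN_nonneg
  have hB := dL2_nonneg w
  have hint := hw.integrable_mul_osc Complex.continuous_ofReal x R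
  have key := norm_integral_le_of_zones (f := fun p => (p : ℂ) * (osc x p * w p))
    (L := 2 * r ^ 2 * supN w)
    (M := 3 * r * supN w + r * dL2 w) ha.1 (by positivity : 0 < 1 / r) hR hint
    (fun p hp => ?_) ?_
  · refine key.trans ?_
    rw [show 3 * (1 / r) * (2 * r ^ 2 * supN w) = 6 * supN w * r by field_simp; ring]
    nlinarith [mul_nonneg hA hr0.le, mul_nonneg hB hr0.le]
  · rw [norm_mul, norm_mul, norm_osc, one_mul, Complex.norm_real, Real.norm_eq_abs,
      abs_of_pos hp.1]
    have h1 : 1 / r ≤ 1 := by rw [div_le_one hr0]; exact hr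
    exact mul_le_mul (by nlinarith [hp.2, ha.le_sq hxr]) (hw.norm_le_supN p) (norm_nonneg _)
      (by positivity)
  · intro b c hb hbc h
    refine (hw.norm_integral_mul_osc_le ha hb hbc (by positivity) h).trans ?_
    rw [show 3 / (1 / r) = 3 * r by field_simp]
    gcongr
    exact inv_sqrt_inv_le hr

lemma physPartial_one_eq (w : ℝ → ℂ) (x : ℝ) {R : ℝ} (hR : 0 ≤ R) :
    physPartial w 1 x R = (1 / Real.pi) * (∫ p in (0 : ℝ)..R, osc x p * w p).re := by
  rw [physPartial, intervalIntegral.integral_of_le hR]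
  rfl

lemma abs_one_div_pi_mul_re_le {z : ℂ} {B : ℝ} (hz : ‖z‖ ≤ B) :
    |(1 / Real.pi) * z.re| ≤ B := by
  have h1 : |z.re| ≤ B := (Complex.abs_re_le_norm z).trans hz
  rw [abs_mul, abs_of_pos (by positivity), one_div_mul_eq_div]
  exact (div_le_self (abs_nonneg _) (by linarith [Real.two_le_pi])).trans h1

/-- The `x`-derivative of the truncated integral at time `1`. -/
def physPartialDeriv (w : ℝ → ℂ) (R x : ℝ) : ℝ :=
  (1 / Real.pi) * (Complex.I * ∫ p in (0 : ℝ)..R, (p : ℂ) * (osc x p * w p)).re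

lemma hasDerivAt_osc (x p : ℝ) :
    HasDerivAt (fun x => osc x p) (Complex.I * p * osc x p) x := by
  have h1 : HasDerivAt (fun x : ℝ => p * x + p ^ 3 * 1) p x := by
    simpa using ((hasDerivAt_id x).const_mul p).add_const (p ^ 3 * 1)
  refine (h1.ofReal_comp.const_mul Complex.I).cexp.congr_deriv ?_
  rw [osc]
  ring

lemma MemE.hasDerivAt_physPartial {w : ℝ → ℂ} (hw : MemE w) {R : ℝ} (hR : 0 ≤ R) (x : ℝ) :
    HasDerivAt (fun x => physPartial w 1 x R) (physPartialDeriv w R x) x := by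
  have hint : ∀ x, Integrable (fun p => osc x p * w p) (volume.restrict (Ioc 0 R)) := fun x => by
    simpa only [one_mul] using hw.integrable_mul_osc (m := fun _ => 1) continuous_const x R
  have hmain := (hasDerivAt_integral_of_dominated_loc_of_deriv_le
    (μ := volume.restrict (Ioc 0 R)) (F := fun x p => osc x p * w p)
    (F' := fun x p => Complex.I * ((p : ℂ) * (osc x p * w p))) (s := univ)
    (bound := fun _ => R * supN w) (x₀ := x) univ_mem
    (Eventually.of_forall fun y => (hint y).aestronglyMeasurable) (hint x)
    ((hw.aestronglyMeasurable_mul_osc Complex.continuous_ofReal x R).const_mul _) ?_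
    (integrable_const _) ?_).2
  · rw [integral_const_mul] at hmain
    have hre := (Complex.reCLM.hasFDerivAt.comp_hasDerivAt x hmain).const_mul (1 / Real.pi)
    rw [physPartialDeriv, intervalIntegral.integral_of_le hR]
    exact hre
  · filter_upwards [ae_restrict_mem measurableSet_Ioc] with p hp y _
    rw [norm_mul, norm_mul, norm_mul, norm_osc, one_mul, Complex.norm_I, one_mul,
      Complex.norm_real, Real.norm_eq_abs, abs_of_pos hp.1]
    exact mul_le_mul hp.2 (hw.norm_le_supN p) (norm_nonneg _) hR
  · refine Eventually.of_forall fun p y _ => ?_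
    refine ((hasDerivAt_osc y p).mul_const (w p)).congr_deriv ?_
    ring

lemma MemE.uniformCauchySeqOn_physPartialDeriv {w : ℝ → ℂ} (hw : MemE w) {M : ℝ} (hM : 0 ≤ M) :
    UniformCauchySeqOn (fun R => physPartialDeriv w R) atTop (Metric.ball (0 : ℝ) M) := by
  have hlim : Tendsto (fun R => 3 / (R - (M + 1)) * supN w + 1 / √(R - (M + 1)) * dL2 w)
      atTop (𝓝 0) := by
    have h1 : Tendsto (fun R : ℝ => R - (M + 1)) atTop atTop :=
      tendsto_atTop_add_const_right _ _ tendsto_id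
    have h2 := (h1.const_div_atTop 3).mul_const (supN w)
    have h3 := ((Real.tendsto_sqrt_atTop.comp h1).const_div_atTop 1).mul_const (dL2 w)
    simpa using h2.add h3
  have htail : ∀ R R', M + 1 < R → R ≤ R' → ∀ x ∈ Metric.ball (0 : ℝ) M,
      dist (physPartialDeriv w R x) (physPartialDeriv w R' x) ≤
        3 / (R - (M + 1)) * supN w + 1 / √(R - (M + 1)) * dL2 w := by
    intro R R' hR hRR x hx
    obtain ⟨a, ha⟩ := exists_isCritical x
    have haM : a ≤ M + 1 := by
      have h1 := ha.three_mul_sq_le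
      rw [mem_ball_zero_iff, Real.norm_eq_abs] at hx
      nlinarith [ha.1, sq_nonneg (a - 1)]
    have hii : ∀ {b c : ℝ}, 0 ≤ b → b ≤ c →
        IntervalIntegrable (fun p : ℝ => (p : ℂ) * (osc x p * w p)) volume b c :=
      fun {b c} hb hbc => (intervalIntegrable_iff_integrableOn_Ioc_of_le hbc).2
        (IntegrableOn.mono_set (hw.integrable_mul_osc Complex.continuous_ofReal x c)
          (Ioc_subset_Ioc_left hb))
    have hsplit := intervalIntegral.integral_add_adjacent_intervals
      (hii le_rfl (by linarith : 0 ≤ R)) (hii (by linarith) hRR)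
    rw [dist_comm, Real.dist_eq, physPartialDeriv, physPartialDeriv, ← hsplit, ← mul_sub,
      ← Complex.sub_re, mul_add, add_sub_cancel_left]
    refine abs_one_div_pi_mul_re_le ?_
    rw [norm_mul, Complex.norm_I, one_mul]
    exact hw.norm_integral_mul_osc_le ha (by linarith) hRR (by linarith)
      (Or.inl (by linarith))
  rw [Metric.uniformCauchySeqOn_iff]
  intro ε hε
  obtain ⟨N, hN⟩ := eventually_atTop.1 ((hlim.eventually (gt_mem_nhds hε)).and
    (eventually_gt_atTop (M + 1)))
  refine ⟨N, fun m hm n hn x hx => ?_⟩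
  rcases le_total m n with h | h
  · exact (htail m n (hN m hm).2 h x hx).trans_lt (hN m hm).1
  · rw [dist_comm]
    exact (htail n m (hN n hn).2 h x hx).trans_lt (hN n hn).1

lemma MemE.exists_hasDerivAt_of_isPhys {w : ℝ → ℂ} (hw : MemE w) {u : ℝ → ℝ}
    (hu : IsPhys w 1 u) : ∃ v : ℝ → ℝ, ∀ x, HasDerivAt u (v x) x ∧
      Tendsto (fun R => physPartialDeriv w R x) atTop (𝓝 (v x)) := by
  have hmem : ∀ x : ℝ, x ∈ Metric.ball (0 : ℝ) (|x| + 1) := fun x => by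
    rw [mem_ball_zero_iff, Real.norm_eq_abs]; linarith
  have hlim : ∀ x : ℝ, ∃ l, Tendsto (fun R => physPartialDeriv w R x) atTop (𝓝 l) := fun x =>
    cauchySeq_tendsto_of_complete
      ((hw.uniformCauchySeqOn_physPartialDeriv (by positivity)).cauchySeq (hmem x))
  choose v hv using hlim
  refine ⟨v, fun x => ⟨?_, hv x⟩⟩
  refine hasDerivAt_of_tendstoLocallyUniformlyOn (l := (atTop : Filter ℝ))
    (f := fun R x => physPartial w 1 x R) (f' := fun R x => physPartialDeriv w R x)
    (Metric.isOpen_ball (x := (0 : ℝ)) (ε := |x| + 1)) ?_ ?_ (fun y _ => hu y) (hmem x)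
  · exact ((hw.uniformCauchySeqOn_physPartialDeriv (by positivity)).tendstoUniformlyOn_of_tendsto
      fun y _ => hv y).tendstoLocallyUniformlyOn
  · filter_upwards [eventually_ge_atTop 0] with R hR y _
    exact hw.hasDerivAt_physPartial hR y

lemma one_le_jap (y : ℝ) : 1 ≤ jap y :=
  Real.one_le_sqrt.2 (by nlinarith [sq_nonneg y])

lemma le_jap_rpow {x r : ℝ} (hr : 1 ≤ r) (hrx : r ^ 4 ≤ |x| ∨ r = 1) :
    r ≤ jap |x| ^ (1 / 4 : ℝ) := by
  rcases hrx with h | rfl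
  · have h1 : r ^ 4 ≤ jap |x| := h.trans (Real.le_sqrt_of_sq_le (by linarith))
    calc r = (r ^ 4) ^ (1 / 4 : ℝ) := by
          rw [← Real.rpow_natCast, ← Real.rpow_mul (by linarith)]; norm_num
      _ ≤ _ := Real.rpow_le_rpow (by positivity) h1 (by norm_num)
  · exact Real.one_le_rpow (one_le_jap _) (by norm_num)

lemma inv_scale_le_jap_rpow {x r : ℝ} (hr : 1 ≤ r) (hxr : |x| ≤ r ^ 4) :
    1 / r ≤ 2 * jap |x| ^ (-(1 / 4 : ℝ)) := by
  have hr0 : 0 < r := by linarith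
  have h4 : 1 ≤ r ^ 4 := one_le_pow₀ hr
  have h1 : jap |x| ≤ (2 * r) ^ 4 :=
    Real.sqrt_le_iff.2 ⟨by positivity, by nlinarith [abs_nonneg x]⟩
  have h2 : jap |x| ^ (1 / 4 : ℝ) ≤ 2 * r := by
    calc jap |x| ^ (1 / 4 : ℝ) ≤ ((2 * r) ^ 4) ^ (1 / 4 : ℝ) :=
          Real.rpow_le_rpow (by linarith [one_le_jap |x|]) h1 (by norm_num)
      _ = 2 * r := by
          rw [← Real.rpow_natCast, ← Real.rpow_mul (by positivity)]; norm_num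
  have h3 : 0 < jap |x| ^ (1 / 4 : ℝ) := Real.rpow_pos_of_pos (by linarith [one_le_jap |x|]) _
  rw [Real.rpow_neg (by linarith [one_le_jap |x|]), ← div_eq_mul_inv, div_le_div_iff₀ hr0 h3]
  linarith

lemma MemE.decay_of_isPhys_one {w : ℝ → ℂ} (hw : MemE w) {u : ℝ → ℝ} (hu : IsPhys w 1 u) :
    Continuous u ∧
    (∀ x, |u x| ≤ 30 * jap |x| ^ (-(1 / 4 : ℝ)) * (supN w + dL2 w)) ∧
    ∀ x, |deriv u x| ≤ 30 * jap |x| ^ (1 / 4 : ℝ) * (supN w + dL2 w) := by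
  obtain ⟨v, hv⟩ := hw.exists_hasDerivAt_of_isPhys hu
  have hE : 0 ≤ supN w + dL2 w := add_nonneg hw.supN_nonneg (dL2_nonneg w)
  refine ⟨continuous_iff_continuousAt.2 fun x => (hv x).1.continuousAt, fun x => ?_, fun x => ?_⟩
  all_goals
    obtain ⟨a, ha⟩ := exists_isCritical x
    obtain ⟨r, hr, hxr, hrx⟩ := exists_scale x
  · refine le_of_tendsto (hu x).abs ?_
    filter_upwards [eventually_ge_atTop (a + 1 / r), eventually_ge_atTop 0] with R hR hR0
    rw [physPartial_one_eq w x hR0]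
    refine (abs_one_div_pi_mul_re_le (hw.norm_partial_le ha hr hrx hxr hR)).trans ?_
    have := mul_le_mul_of_nonneg_left (inv_scale_le_jap_rpow hr hxr)
      (mul_nonneg (by norm_num : (0 : ℝ) ≤ 15) hE)
    rw [div_eq_mul_one_div]
    linarith
  · rw [(hv x).1.deriv]
    refine le_of_tendsto (hv x).2.abs ?_
    filter_upwards [eventually_ge_atTop (a + 1 / r)] with R hR
    refine (abs_one_div_pi_mul_re_le (B := 15 * (supN w + dL2 w) * r) ?_).trans ?_
    · rw [norm_mul, Complex.norm_I, one_mul]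
      exact hw.norm_partial_deriv_le ha hr hxr hR
    · have h1 := mul_le_mul_of_nonneg_left (le_jap_rpow hr hrx) hE
      have h2 := mul_nonneg hE (by linarith : 0 ≤ r)
      linarith

lemma map_inv_mul_restrict_Ioi {l : ℝ} (hl : 0 < l) :
    Measure.map (fun q => l⁻¹ * q) (volume.restrict (Ioi (0 : ℝ))) =
      ENNReal.ofReal l • volume.restrict (Ioi (0 : ℝ)) := by
  have hpre : (fun q : ℝ => l⁻¹ * q) ⁻¹' Ioi 0 = Ioi 0 := by
    ext q
    simp [hl]
  have h := Measure.restrict_map (μ := (volume : Measure ℝ)) (f := fun q => l⁻¹ * q)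
    (by fun_prop) (measurableSet_Ioi (a := (0 : ℝ)))
  rw [hpre, Real.map_volume_mul_left (inv_ne_zero hl.ne'), inv_inv, abs_of_pos hl,
    Measure.restrict_smul] at h
  exact h.symm

lemma deriv_dilation (w : ℝ → ℂ) (l : ℝ) :
    deriv (fun q => w (l⁻¹ * q)) = l⁻¹ • (deriv w ∘ fun q => l⁻¹ * q) := by
  funext q
  simpa using deriv_comp_mul_left l⁻¹ w q

lemma MemE.dilation {w : ℝ → ℂ} (hw : MemE w) {l : ℝ} (hl : 0 < l) :
    MemE (fun q => w (l⁻¹ * q)) where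
  symm p := by rw [mul_neg, hw.symm]
  cont := hw.cont.comp (by fun_prop) fun p hp => mul_pos (inv_pos.2 hl) hp
  bdd := hw.bdd.mono (by rintro _ ⟨p, rfl⟩; exact ⟨l⁻¹ * p, rfl⟩)
  diff p hp := (hw.diff (l⁻¹ * p) (mul_pos (inv_pos.2 hl) hp)).comp p (by fun_prop)
  derivL2 := by
    rw [deriv_dilation]
    refine MemLp.const_smul (MemLp.comp_of_map ?_ (by fun_prop)) _
    rw [map_inv_mul_restrict_Ioi hl]
    exact hw.derivL2.smul_measure ENNReal.ofReal_ne_top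

lemma supN_dilation (w : ℝ → ℂ) {l : ℝ} (hl : 0 < l) :
    supN (fun q => w (l⁻¹ * q)) = supN w :=
  Function.Surjective.iSup_comp (mul_left_surjective₀ (inv_ne_zero hl.ne')) fun p => ‖w p‖

lemma MemE.dL2_dilation {w : ℝ → ℂ} (hw : MemE w) {l : ℝ} (hl : 0 < l) :
    dL2 (fun q => w (l⁻¹ * q)) = l ^ (-(1 / 2 : ℝ)) * dL2 w := by
  have hmap := map_inv_mul_restrict_Ioi hl
  rw [dL2, dL2, deriv_dilation, eLpNorm_const_smul, ← eLpNorm_map_measure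
    (by rw [hmap]; exact (hw.derivL2.smul_measure ENNReal.ofReal_ne_top).1) (by fun_prop), hmap,
    eLpNorm_smul_measure_of_ne_top (by norm_num), smul_eq_mul, ENNReal.toReal_mul,
    ENNReal.toReal_mul, ← ENNReal.toReal_rpow, ENNReal.toReal_ofReal hl.le, toReal_enorm,
    Real.norm_eq_abs, abs_of_pos (inv_pos.2 hl), ← mul_assoc, ← Real.rpow_neg_one,
    ← Real.rpow_add hl]
  norm_num

lemma physPartial_dilation (w : ℝ → ℂ) {l : ℝ} (hl : 0 < l) (y : ℝ) {R : ℝ} (hR : 0 ≤ R) :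
    physPartial (fun q => w (l⁻¹ * q)) 1 y R = l * physPartial w (l ^ 3) (l * y) (l⁻¹ * R) := by
  have h := intervalIntegral.integral_comp_mul_left (a := 0) (b := R) (c := l⁻¹)
    (fun p : ℝ => Complex.exp (Complex.I * ((p * (l * y) + p ^ 3 * l ^ 3 : ℝ) : ℂ)) * w p)
    (inv_ne_zero hl.ne')
  rw [inv_inv, mul_zero] at h
  rw [physPartial, physPartial, ← intervalIntegral.integral_of_le hR,
    ← intervalIntegral.integral_of_le (by positivity)]
  have h2 : ∀ q : ℝ, q * y + q ^ 3 * 1 = l⁻¹ * q * (l * y) + (l⁻¹ * q) ^ 3 * l ^ 3 := fun q => by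
    field_simp
  simp only [h2]
  rw [h, Complex.real_smul, Complex.re_ofReal_mul]
  ring

lemma IsPhys.dilation {w : ℝ → ℂ} {l : ℝ} (hl : 0 < l) {u : ℝ → ℝ} (hu : IsPhys w (l ^ 3) u) :
    IsPhys (fun q => w (l⁻¹ * q)) 1 (fun y => l * u (l * y)) := by
  intro y
  have h1 : Tendsto (fun R : ℝ => l⁻¹ * R) atTop atTop :=
    tendsto_id.const_mul_atTop (inv_pos.2 hl)
  refine (((hu (l * y)).comp h1).const_mul l).congr' ?_
  filter_upwards [eventually_ge_atTop 0] with R hR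
  exact (physPartial_dilation w hl y hR).symm

/-- decay estimates for functions with profile in `L^∞ ∩ Ḣ¹((0,∞))`. -/
theorem decay_estimates :
    ∃ C : ℝ, 0 < C ∧
    ∀ t : ℝ, 0 < t → ∀ w : ℝ → ℂ, MemE w →
    ∀ u : ℝ → ℝ, IsPhys w t u →
      Continuous u ∧
      (∀ x : ℝ,
        |u x| ≤ C * t ^ (-(1 / 3 : ℝ)) * jap (|x| / t ^ (1 / 3 : ℝ)) ^ (-(1 / 4 : ℝ)) *
          EnormP t w) ∧
      (∀ x : ℝ,
        |deriv u x| ≤ C * t ^ (-(2 / 3 : ℝ)) * jap (|x| / t ^ (1 / 3 : ℝ)) ^ (1 / 4 : ℝ) *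
          EnormP t w) := by
  refine ⟨30, by norm_num, fun t ht w hw u hu => ?_⟩
  set l := t ^ (1 / 3 : ℝ) with hl_def
  have hl : 0 < l := Real.rpow_pos_of_pos ht _
  have hlt : l ^ 3 = t := by
    rw [hl_def, ← Real.rpow_natCast, ← Real.rpow_mul ht.le]; norm_num
  have hl1 : t ^ (-(1 / 3 : ℝ)) = l⁻¹ := by rw [hl_def, ← Real.rpow_neg ht.le]
  have hl2 : t ^ (-(2 / 3 : ℝ)) = l⁻¹ * l⁻¹ := by
    rw [← hl1, ← Real.rpow_add ht]; norm_num
  have hE : supN (fun q => w (l⁻¹ * q)) + dL2 (fun q => w (l⁻¹ * q)) = EnormP t w := by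
    rw [supN_dilation w hl, hw.dL2_dilation hl, EnormP, hl_def, ← Real.rpow_mul ht.le]
    norm_num
  rw [← hlt] at hu
  obtain ⟨hc, hb, hd⟩ := (hw.dilation hl).decay_of_isPhys_one (hu.dilation hl)
  rw [hE] at hb hd
  have hux : u = fun x => l⁻¹ * (l * u (l * (l⁻¹ * x))) := by
    funext x
    rw [mul_inv_cancel_left₀ hl.ne', inv_mul_cancel_left₀ hl.ne']
  have habs : ∀ x : ℝ, |l⁻¹ * x| = |x| / l := fun x => by
    rw [abs_mul, abs_of_pos (inv_pos.2 hl), inv_mul_eq_div]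
  refine ⟨?_, fun x => ?_, fun x => ?_⟩
  · rw [hux]
    exact continuous_const.mul (hc.comp (continuous_const_mul l⁻¹))
  · have h1 := mul_le_mul_of_nonneg_left (hb (l⁻¹ * x)) (inv_pos.2 hl).le
    rw [habs] at h1
    rw [hl1, congrFun hux x, abs_mul, abs_of_pos (inv_pos.2 hl)]
    linarith
  · have h1 := mul_le_mul_of_nonneg_left (hd (l⁻¹ * x))
      (mul_pos (inv_pos.2 hl) (inv_pos.2 hl)).le
    rw [habs] at h1
    have h2 : deriv u x = l⁻¹ * l⁻¹ * deriv (fun y => l * u (l * y)) (l⁻¹ * x) := by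
      conv_lhs => rw [hux]
      rw [deriv_const_mul_field, deriv_comp_mul_left l⁻¹ (fun y => l * u (l * y)) x,
        smul_eq_mul, mul_assoc]
    rw [hl2, h2, abs_mul, abs_of_pos (mul_pos (inv_pos.2 hl) (inv_pos.2 hl))]
    linarith

end MKdVPaper
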